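/- Let F be the column of the 14 polynomials in ℚ[a_1,a_2,a_3,a_4,b_1,b_2] listed in the context. There exists a nonzero polynomial Q with rational coefficients in the 84 entries of a 6×14 matrix such that for every complex matrix P ∈ ℂ^{6×14} with Q(P) ≠ 0, the polynomial system P·F(a,b) = 0 (six equations in the six unknowns a_1,a_2,a_3,a_4,b_1,b_2) has exactly 18 solutions in ℂ^6. (This is the count of plane conics through the origin meeting six general lines in ℂ³.) -/

import Mathlib

/-!
The incidence variety of pairs `(P, z)` with `P · F(z) = 0` is an affine space of dimension
`84 = 6 + 78`, because `F₀ = 1` allows solving for the first column of `P`. The theorem says that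
its projection to the space of matrices is generically finite of degree 18. Since a general
fibre is read off from the minimal polynomial of one coordinate over the function field of the
space of matrices, it suffices to show that `b₁` has a minimal polynomial of degree 18 over
this field and generates the other coordinates.

Both facts come from one special matrix `P₀` (`specialRow`), whose fibre is the spectrum of
`ℚ[T]/(T¹⁸ - T¹³)` with `b₁ = T`.

*Upper bound.* No solutions escape to infinity near `P₀`: over the local ring `O` of the space of
matrices at `P₀`, the span of the products `b₁ⁱ b₂ʲ F_l` with `i + j < 5` is stable under
multiplication by `b₁` and `b₂`. Modulo the maximal ideal and lower degree, this is a rewriting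
argument with the rows of `P₀` and the syzygies of `F`; Nakayama's lemma lifts it
(`filt_six_le`, `filt_eq_adjoin`). Hence the coordinate algebra is finite over `O`, and by Nakayama
again it is spanned by the powers `b₁ⁱ`, `i < 18`, as is its special fibre (`local_span`).
Clearing denominators gives `exists_generic_relations`. As the projection is then generically
finite between varieties of equal dimension, it is dominant (`incProj_injective`).

*Lower bound.* The irreducible equation `f` of `b₁` has leading coefficient nonzero at `P₀`, and its
specialization at `P₀` vanishes at `b₁ = T`, so it is divisible by `T¹⁸ - T¹³`
(`exists_minimal_polynomial`).

*Spreading out.* In characteristic 0 the polynomial `f` is separable over the function field. Where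
the leading coefficient of `f`, the denominator `s` of the coordinates and a Bézout constant of
`f` and its derivative do not vanish, the solutions correspond to the 18 simple roots of `f`
(`generic_count`). That every root gives a solution holds because, by Gauss's lemma, `f` divides
every polynomial over the matrix ring vanishing at `b₁` (`dvd_of_eval₂_eq_zero`).
-/

open MvPolynomial

/-- The 14 polynomials in `ℚ[a₁,a₂,a₃,a₄,b₁,b₂]` arising from plane conics in `ℂ³` through the
origin; the variables are `a₁ = X 0, a₂ = X 1, a₃ = X 2, a₄ = X 3, b₁ = X 4, b₂ = X 5`. -/
noncomputable def conicF : Fin 14 → MvPolynomial (Fin 6) ℚ :=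
  ![1, X 0, X 1, X 2, X 3,
    X 2 * X 4, X 2 * X 5, X 3 * X 4, X 3 * X 5,
    X 0 * X 4 - 2 * X 5, X 0 * X 5 - 2 * X 1 * X 4,
    X 4 * (X 3 * X 4 - X 2 * X 5), X 5 * (X 3 * X 4 - X 2 * X 5),
    X 1 * X 4 ^ 2 - X 0 * X 4 * X 5 + X 5 ^ 2]

/-! ### The filtration by degree in `b₁, b₂` -/

/-- The 14 conic polynomials evaluated at a point `z` of a commutative ring. -/
def conicVal {A : Type*} [CommRing A] (z : Fin 6 → A) : Fin 14 → A :=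
  ![1, z 0, z 1, z 2, z 3,
    z 2 * z 4, z 2 * z 5, z 3 * z 4, z 3 * z 5,
    z 0 * z 4 - 2 * z 5, z 0 * z 5 - 2 * z 1 * z 4,
    z 4 * (z 3 * z 4 - z 2 * z 5), z 5 * (z 3 * z 4 - z 2 * z 5),
    z 1 * z 4 ^ 2 - z 0 * z 4 * z 5 + z 5 ^ 2]

/-- The rows of the special matrix `P₀`, as linear forms in the 14 conic polynomials. -/
def specialRow {A : Type*} [CommRing A] (G : Fin 14 → A) : Fin 6 → A :=
  ![G 9 + G 8, G 2, G 10 - G 3 - G 11, G 12 - G 0 + G 4, G 1 - G 5, G 13]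

lemma map_conicVal {A B : Type*} [CommRing A] [CommRing B] (f : A →+* B) (z : Fin 6 → A)
    (l : Fin 14) : conicVal (fun j => f (z j)) l = f (conicVal z l) := by
  fin_cases l <;> simp [conicVal, map_ofNat]

lemma map_specialRow {A B : Type*} [CommRing A] [CommRing B] (f : A →+* B) (G : Fin 14 → A)
    (k : Fin 6) : specialRow (fun l => f (G l)) k = f (specialRow G k) := by
  fin_cases k <;> simp [specialRow]

lemma map_specialRow_conicVal {A B : Type*} [CommRing A] [CommRing B] (f : A →+* B)
    (z : Fin 6 → A) (k : Fin 6) :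
    specialRow (conicVal fun j => f (z j)) k = f (specialRow (conicVal z) k) := by
  rw [← map_specialRow]
  congr 1
  ext l
  exact map_conicVal f z l

section Local

variable (O : Type*) {A : Type*} [CommRing O] [CommRing A] [Algebra O A]

/-- The `O`-span of the products `b₁ⁱ b₂ʲ F_l` with `i + j < d`, where `b₁ = z 4`, `b₂ = z 5`.
The number `i + j` is called the degree of such a product. -/
def filt (z : Fin 6 → A) (d : ℕ) : Submodule O A :=
  Submodule.span O {w | ∃ i j l, i + j < d ∧ w = z 4 ^ i * z 5 ^ j * conicVal z l}

/-- The elements that are negligible in degree `d`: those congruent to an element of degree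
`< d` modulo `𝔪` times the elements of degree `≤ d`. -/
def small [IsLocalRing O] (z : Fin 6 → A) (d : ℕ) : Submodule O A :=
  filt O z d ⊔ IsLocalRing.maximalIdeal O • filt O z (d + 1)

variable {O}

lemma filt_mono (z : Fin 6 → A) {d e : ℕ} (h : d ≤ e) : filt O z d ≤ filt O z e := by
  apply Submodule.span_mono
  rintro w ⟨i, j, l, hij, rfl⟩
  exact ⟨i, j, l, by omega, rfl⟩

lemma filt_fg (z : Fin 6 → A) (d : ℕ) : (filt O z d).FG := by
  apply Submodule.fg_span
  apply Set.Finite.subset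
    (Set.finite_range (fun t : Fin d × Fin d × Fin 14 =>
      z 4 ^ (t.1 : ℕ) * z 5 ^ (t.2.1 : ℕ) * conicVal z t.2.2))
  rintro w ⟨i, j, l, hij, rfl⟩
  exact ⟨(⟨i, by omega⟩, ⟨j, by omega⟩, l), rfl⟩

lemma mul_mem_filt (z : Fin 6 → A) {d : ℕ} {c : A} (hc : c = z 4 ∨ c = z 5) {w : A}
    (hw : w ∈ filt O z d) : c * w ∈ filt O z (d + 1) := by
  have : (filt O z d).map (LinearMap.mulLeft O c) ≤ filt O z (d + 1) := by
    rw [filt, Submodule.map_span_le]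
    rintro _ ⟨i, j, l, hij, rfl⟩
    apply Submodule.subset_span
    rcases hc with rfl | rfl
    · exact ⟨i + 1, j, l, by omega, by simp only [LinearMap.mulLeft_apply]; ring⟩
    · exact ⟨i, j + 1, l, by omega, by simp only [LinearMap.mulLeft_apply]; ring⟩
  exact this ⟨w, hw, rfl⟩

lemma mul_mem_small [IsLocalRing O] (z : Fin 6 → A) {d : ℕ} {c : A} (hc : c = z 4 ∨ c = z 5) {w : A}
    (hw : w ∈ small O z d) : c * w ∈ small O z (d + 1) := by
  have : (small O z d).map (LinearMap.mulLeft O c) ≤ small O z (d + 1) := by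
    rw [small, small, Submodule.map_sup, Submodule.map_smul'']
    apply sup_le_sup
    · rintro _ ⟨w, hw, rfl⟩
      exact mul_mem_filt z hc hw
    · apply Submodule.smul_mono le_rfl
      rintro _ ⟨w, hw, rfl⟩
      exact mul_mem_filt z hc hw
  exact this ⟨w, hw, rfl⟩

lemma conicVal_mem_filt (z : Fin 6 → A) (l : Fin 14) : conicVal z l ∈ filt O z 1 :=
  Submodule.subset_span ⟨0, 0, l, by omega, by simp⟩

/-- If the rows of `P₀ · F` vanish modulo `𝔪`, every product `b₁ⁱ b₂ʲ F_l` with `i + j = 5` is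
negligible, so by Nakayama's lemma the filtration is stationary from there on. The linear forms
defining `P₀` are chosen so that this rewriting terminates in low degree. -/
lemma filt_six_le [IsLocalRing O] (h2 : IsUnit (2 : O)) (z : Fin 6 → A)
    (hφ : ∀ k, specialRow (conicVal z) k ∈ IsLocalRing.maximalIdeal O • filt O z 1) :
    filt O z 6 ≤ filt O z 5 := by
  set x := z 4 with hx
  set y := z 5 with hy
  set G := conicVal z with hG
  have X {d : ℕ} {w : A} (h : w ∈ small O z d) : x * w ∈ small O z (d + 1) :=
    mul_mem_small z (Or.inl rfl) h
  have Y {d : ℕ} {w : A} (h : w ∈ small O z d) : y * w ∈ small O z (d + 1) :=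
    mul_mem_small z (Or.inr rfl) h
  have low (l : Fin 14) : G l ∈ small O z 1 :=
    Submodule.mem_sup_left (conicVal_mem_filt z l)
  have φ (k) : specialRow G k ∈ small O z 0 := Submodule.mem_sup_right (hφ k)
  have φ0 := φ 0
  have φ1 := φ 1
  have φ2 := φ 2
  have φ3 := φ 3
  have φ4 := φ 4
  have φ5 := φ 5
  simp only [specialRow] at φ0 φ1 φ2 φ3 φ4 φ5
  simp at φ0 φ1 φ2 φ3 φ4 φ5
  have e0 : G 0 = 1 := rfl
  have e1 : G 1 = z 0 := rfl
  have e2 : G 2 = z 1 := rfl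
  have e3 : G 3 = z 2 := rfl
  have e4 : G 4 = z 3 := rfl
  have e5 : G 5 = z 2 * x := rfl
  have e6 : G 6 = z 2 * y := rfl
  have e7 : G 7 = z 3 * x := rfl
  have e8 : G 8 = z 3 * y := rfl
  have e9 : G 9 = z 0 * x - 2 * y := rfl
  have e10 : G 10 = z 0 * y - 2 * z 1 * x := rfl
  have e11 : G 11 = x * (z 3 * x - z 2 * y) := rfl
  have e12 : G 12 = y * (z 3 * x - z 2 * y) := rfl
  have e13 : G 13 = z 1 * x ^ 2 - z 0 * x * y + y ^ 2 := rfl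
  have cong {d : ℕ} {w w' : A} (h : w ∈ small O z d) (e : w' = w) : w' ∈ small O z d := e ▸ h
  have add {d : ℕ} {w w' : A} (h : w ∈ small O z d) (h' : w' ∈ small O z d) :
      w + w' ∈ small O z d := add_mem h h'
  have sub {d : ℕ} {w w' : A} (h : w ∈ small O z d) (h' : w' ∈ small O z d) :
      w - w' ∈ small O z d := sub_mem h h'
  have half {d : ℕ} {w : A} (h : 2 * w ∈ small O z d) : w ∈ small O z d := by
    obtain ⟨r, hr⟩ := h2.exists_left_inv
    refine cong (Submodule.smul_mem _ r h) ?_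
    have : (algebraMap O A r) * 2 = 1 := by
      have := congrArg (algebraMap O A) hr
      rwa [map_mul, map_one, map_ofNat] at this
    rw [Algebra.smul_def, ← mul_assoc, this, one_mul]
  -- Relations in degree 1, modulo negligible elements; a name such as `x3` records the
  -- product `x * G 3` found to be negligible.
  have x3 : x * G 3 ∈ small O z 1 := cong (low 5) (by rw [e3, e5]; ring)
  have y3 : y * G 3 ∈ small O z 1 := cong (low 6) (by rw [e3, e6]; ring)
  have x4 : x * G 4 ∈ small O z 1 := cong (low 7) (by rw [e4, e7]; ring)
  have y4 : y * G 4 ∈ small O z 1 := cong (low 8) (by rw [e4, e8]; ring)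
  have x2 := X φ1
  have y2 := Y φ1
  have y5 : y * G 5 ∈ small O z 1 :=
    cong (sub (add (low 10) (add x2 x2)) (Y φ4)) (by rw [e10, e2, e1, e5]; ring)
  have x6 : x * G 6 ∈ small O z 1 := cong y5 (by rw [e6, e5]; ring)
  have x7 : x * G 7 ∈ small O z 1 := cong (add (low 11) x6) (by rw [e11, e6, e7]; ring)
  have y68 : y * G 6 - x * G 8 ∈ small O z 1 :=
    cong (neg_mem (low 12)) (by rw [e6, e8, e12]; ring)
  have x51 : x * G 5 - 2 * (y * G 0) ∈ small O z 1 :=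
    cong (sub (low 9) (X φ4)) (by rw [e5, e0, e9, e1]; ring)
  have y811 : y * G 8 - x * G 11 ∈ small O z 1 :=
    cong (add (add (Y φ0) (X φ2)) (add x3 (add (low 13) (low 13)))) (by
      rw [e8, e11, e9, e10, e3, e13]; ring)
  have y110 : y * G 11 - x * G 0 ∈ small O z 1 :=
    cong (sub (X φ3) x4) (by rw [e11, e12, e0, e4]; ring)
  -- Relations in degrees 2 and 4.
  have yy0 : y * (y * G 0) ∈ small O z 2 :=
    half (cong (sub (X y5) (Y x51)) (by ring))
  have xx8 : x * (x * G 8) ∈ small O z 2 := cong (sub (Y x6) (X y68)) (by ring)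
  have xx0 : x * (x * G 0) - y * (y * G 8) ∈ small O z 2 :=
    cong (neg_mem (add (X y110) (Y y811))) (by ring)
  have x40 : x * (x * (x * (x * G 0))) ∈ small O z 4 :=
    cong (add (X (X xx0)) (Y (Y xx8))) (by ring)
  have y48 : y * (y * (y * (y * G 8))) ∈ small O z 4 :=
    cong (sub (X (X yy0)) (Y (Y xx0))) (by ring)
  -- Degree 5, for the eight forms that are not eliminated by the rows of `P₀`.
  have case (l : Fin 14) (h50 : x * (x * (x * (x * (x * G l)))) ∈ small O z 5)
      (h41 : x * (x * (x * (x * (y * G l)))) ∈ small O z 5)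
      (h32 : x * (x * (x * (y * (y * G l)))) ∈ small O z 5)
      (h23 : x * (x * (y * (y * (y * G l)))) ∈ small O z 5)
      (h14 : x * (y * (y * (y * (y * G l)))) ∈ small O z 5)
      (h05 : y * (y * (y * (y * (y * G l)))) ∈ small O z 5) :
      ∀ i j : ℕ, i + j = 5 → x ^ i * y ^ j * G l ∈ small O z 5 := by
    intro i j hij
    have hi : i ≤ 5 := by omega
    obtain rfl : j = 5 - i := by omega
    interval_cases i
    · exact cong h05 (by ring)
    · exact cong h14 (by ring)
    · exact cong h23 (by ring)
    · exact cong h32 (by ring)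
    · exact cong h41 (by ring)
    · exact cong h50 (by ring)
  have D0 := case 0 (X x40) (cong (Y x40) (by ring)) (X (X (X yy0)))
    (cong (Y (X (X yy0))) (by ring)) (cong (X (Y (Y yy0))) (by ring)) (Y (Y (Y yy0)))
  have D3 := case 3 (X (X (X (X x3)))) (X (X (X (X y3)))) (X (X (X (Y y3)))) (X (X (Y (Y y3))))
    (X (Y (Y (Y y3)))) (Y (Y (Y (Y y3))))
  have D4 := case 4 (X (X (X (X x4)))) (X (X (X (X y4)))) (X (X (X (Y y4)))) (X (X (Y (Y y4))))
    (X (Y (Y (Y y4)))) (Y (Y (Y (Y y4))))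
  have D5 := case 5
    (cong (add (X (X (X (X x51)))) (add (Y x40) (Y x40))) (by ring))
    (X (X (X (X y5)))) (X (X (X (Y y5)))) (X (X (Y (Y y5)))) (X (Y (Y (Y y5)))) (Y (Y (Y (Y y5))))
  have D8 := case 8 (X (X (X xx8))) (cong (Y (X (X xx8))) (by ring))
    (cong (Y (Y (X xx8))) (by ring))
    (cong (Y (Y (Y xx8))) (by ring)) (X y48) (Y y48)
  have y78 : y * G 7 = x * G 8 := by rw [e7, e8]; ring
  have D6 := case 6 (X (X (X (X x6)))) (cong (X (X (X (Y x6)))) (by ring))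
    (cong (X (X (Y (Y x6)))) (by ring)) (cong (X (Y (Y (Y x6)))) (by ring))
    (cong (Y (Y (Y (Y x6)))) (by ring))
    (cong (add (Y (Y (Y (Y y68)))) (X y48)) (by ring))
  have D7 := case 7 (X (X (X (X x7)))) (cong (X (X (X (Y x7)))) (by ring))
    (cong (X (X (Y (Y x7)))) (by ring)) (cong (X (Y (Y (Y x7)))) (by ring))
    (cong (Y (Y (Y (Y x7)))) (by ring))
    (cong (X y48) (by rw [y78]; ring))
  have D11 := case 11
    (cong (sub (Y (X (X xx8))) (X (X (X (X y811))))) (by ring))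
    (cong (add (X (X (X (X y110)))) (X x40)) (by ring))
    (cong (add (Y (X (X (X y110)))) (Y x40)) (by ring))
    (cong (add (Y (Y (X (X y110)))) (X (X (X yy0)))) (by ring))
    (cong (add (Y (Y (Y (X y110)))) (X (X (Y yy0)))) (by ring))
    (cong (add (Y (Y (Y (Y y110)))) (X (Y (Y yy0)))) (by ring))
  -- The remaining forms reduce to these through the rows of `P₀`.
  have B {w : A} (h : w ∈ small O z 0) (i j : ℕ) (hij : i + j = 5) :
      x ^ i * y ^ j * w ∈ small O z 5 := by
    have hi : i ≤ 5 := by omega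
    obtain rfl : j = 5 - i := by omega
    interval_cases i
    · exact cong (Y (Y (Y (Y (Y h))))) (by ring)
    · exact cong (X (Y (Y (Y (Y h))))) (by ring)
    · exact cong (X (X (Y (Y (Y h))))) (by ring)
    · exact cong (X (X (X (Y (Y h))))) (by ring)
    · exact cong (X (X (X (X (Y h))))) (by ring)
    · exact cong (X (X (X (X (X h))))) (by ring)
  have top (i j : ℕ) (l : Fin 14) (hij : i + j = 5) : x ^ i * y ^ j * G l ∈ small O z 5 := by
    have D1 : x ^ i * y ^ j * G 1 ∈ small O z 5 :=
      cong (add (B φ4 i j hij) (D5 i j hij)) (by ring)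
    have D9 : x ^ i * y ^ j * G 9 ∈ small O z 5 :=
      cong (sub (B φ0 i j hij) (D8 i j hij)) (by ring)
    have D10 : x ^ i * y ^ j * G 10 ∈ small O z 5 :=
      cong (add (B φ2 i j hij) (add (D3 i j hij) (D11 i j hij))) (by ring)
    have D12 : x ^ i * y ^ j * G 12 ∈ small O z 5 :=
      cong (add (B φ3 i j hij) (sub (D0 i j hij) (D4 i j hij))) (by ring)
    fin_cases l
    exacts [D0 i j hij, D1, B φ1 i j hij, D3 i j hij, D4 i j hij, D5 i j hij, D6 i j hij,
      D7 i j hij, D8 i j hij, D9, D10, D11 i j hij, D12, B φ5 i j hij]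
  refine Submodule.le_of_le_smul_of_le_jacobson_bot (filt_fg z 6)
    (IsLocalRing.maximalIdeal_le_jacobson _) (Submodule.span_le.2 ?_)
  rintro w ⟨i, j, l, hij, rfl⟩
  rcases (show i + j < 5 ∨ i + j = 5 by omega) with h | h
  · exact Submodule.mem_sup_left (Submodule.subset_span ⟨i, j, l, h, rfl⟩)
  · exact top i j l h

end Local

/-! ### The solutions of the special system -/

/-- For a solution of the special system `P₀ · F = 0` in any commutative ring, `b₂` is a
polynomial in `b₁`, and `b₁` is a root of `T¹⁸ - T¹³`. -/
lemma special_solution {C : Type*} [CommRing C] (z : Fin 6 → C)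
    (h : ∀ k, specialRow (conicVal z) k = 0) :
    z 5 = -z 4 ^ 4 + 2 * z 4 ^ 14 ∧ z 4 ^ 18 = z 4 ^ 13 := by
  have h0 : z 0 * z 4 - 2 * z 5 + z 3 * z 5 = 0 := h 0
  have h1 : z 1 = 0 := h 1
  have h2 : z 0 * z 5 - 2 * z 1 * z 4 - z 2 - z 4 * (z 3 * z 4 - z 2 * z 5) = 0 := h 2
  have h3 : z 5 * (z 3 * z 4 - z 2 * z 5) - 1 + z 3 = 0 := h 3
  have h4 : z 0 - z 2 * z 4 = 0 := h 4
  have h5 : z 1 * z 4 ^ 2 - z 0 * z 4 * z 5 + z 5 ^ 2 = 0 := h 5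
  rw [sub_eq_zero] at h4
  generalize z 4 = x at *
  generalize z 5 = y at *
  generalize z 2 = u at *
  generalize z 3 = v at *
  rw [h1, h4] at h2 h5
  rw [h4] at h0
  obtain ⟨w, hw⟩ : ∃ w, w = x * y := ⟨_, rfl⟩
  obtain ⟨q, hq⟩ : ∃ q, q = 1 - w - w ^ 2 := ⟨_, rfl⟩
  obtain ⟨t, ht⟩ : ∃ t, t = y * (1 - 2 * w ^ 2) + x ^ 4 := ⟨_, rfl⟩
  have i1 : u * q = -x ^ 2 := by
    subst hq hw
    linear_combination (-(1 + x * y)) * h2 - x ^ 2 * h3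
  have i2 : y * (y * q + x ^ 4) = 0 := by
    subst hq hw
    linear_combination (1 - x * y - x ^ 2 * y ^ 2) * h5 + x ^ 2 * y * i1
  have i3 : (1 + w) * t = 0 := by
    subst ht hq hw
    linear_combination (1 - x * y - (x * y) ^ 2) * (y * h3 - (1 + x * y) * h0)
      + ((1 + x * y) * x ^ 2 + y ^ 3) * i1
  have i4 : x ^ 2 * t = 0 := by
    subst ht hq hw
    linear_combination -(1 - x * y - (x * y) ^ 2) * (y * h2 + x ^ 2 * h0)
      + (2 * x * y ^ 2 - y + x ^ 4) * i1
  have i5 : t = 0 := by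
    subst hw
    linear_combination (1 - x * y) * i3 + y ^ 2 * i4
  have i6 : y ^ 2 * w = y ^ 2 * w ^ 2 := by
    subst hq ht
    linear_combination y * i5 - i2
  have i7 : w ^ 3 = w ^ 4 := by
    subst hw
    linear_combination x ^ 2 * i6
  rw [ht] at i5
  have j1 : w = -x ^ 5 + 2 * w ^ 3 := by linear_combination x * i5 + (1 - 2 * w ^ 2) * hw
  have j2 : w ^ 3 * x ^ 5 = w ^ 3 := by
    linear_combination w ^ 3 * j1 - (2 * w ^ 2 + 2 * w + 1) * i7
  have j3 : w ^ 2 = x ^ 10 := by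
    linear_combination (w - x ^ 5 + 2 * w ^ 3) * j1 - 4 * j2 - 4 * (w ^ 2 + w + 1) * i7
  have j4 : w ^ 3 = x ^ 15 := by
    linear_combination x ^ 5 * j3 - w ^ 2 * j1 + 2 * (w + 1) * i7
  have j5 : y * w ^ 2 = y * w ^ 3 := by
    linear_combination x * i6 + (y * w - y * w ^ 2) * hw
  have j6 : y * w ^ 2 = x ^ 14 := by
    linear_combination x ^ 4 * j3 - w ^ 2 * i5 + 2 * (w + 1) * j5
  have hy : y = -x ^ 4 + 2 * x ^ 14 := by linear_combination i5 + 2 * j6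
  refine ⟨hy, ?_⟩
  have g : x ^ 20 = x ^ 15 := by
    linear_combination -(w ^ 2 + x ^ 10) * j3 - i7 + j4
  have f : x * y ^ 3 = x ^ 2 * y ^ 4 := by
    linear_combination i6 + (-y ^ 2 + y ^ 2 * (w + x * y)) * hw
  rw [hy] at f
  linear_combination f + (-8 * (x ^ 8 + x ^ 3) + 24 * (x ^ 18 + x ^ 13 + x ^ 8 + x ^ 3)
    - 32 * (x ^ 28 + x ^ 23 + x ^ 18 + x ^ 13 + x ^ 8 + x ^ 3)
    + 16 * (x ^ 38 + x ^ 33 + x ^ 28 + x ^ 23 + x ^ 18 + x ^ 13 + x ^ 8 + x ^ 3)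
    - 6 * x ^ 3 + 12 * (x ^ 13 + x ^ 8 + x ^ 3)
    - 8 * (x ^ 23 + x ^ 18 + x ^ 13 + x ^ 8 + x ^ 3)) * g

/-! ### Finiteness near the special matrix -/

/-- The multipliers `c` of `A` with `c · N ⊆ N`. -/
def multipliers (O : Type*) {A : Type*} [CommRing O] [CommRing A] [Algebra O A]
    (N : Submodule O A) : Subalgebra O A where
  carrier := {c | ∀ w ∈ N, c * w ∈ N}
  mul_mem' := fun {a b} ha hb w hw => by rw [mul_assoc]; exact ha _ (hb _ hw)
  add_mem' := fun {a b} ha hb w hw => by rw [add_mul]; exact add_mem (ha _ hw) (hb _ hw)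
  algebraMap_mem' := fun r w hw => by rw [← Algebra.smul_def]; exact N.smul_mem r hw

section Local

variable {O A : Type*} [CommRing O] [IsLocalRing O] [CommRing A] [Algebra O A]

/-- Near `P₀`, the products `b₁ⁱ b₂ʲ F_l` with `i + j < 5` span the algebra generated by
`b₁, b₂`, since modulo `𝔪` the other coordinates are polynomials in `b₁, b₂`. -/
lemma filt_eq_adjoin (h2 : IsUnit (2 : O)) (z : Fin 6 → A)
    (hφ : ∀ k, specialRow (conicVal z) k ∈ IsLocalRing.maximalIdeal O • filt O z 1) :
    filt O z 5 = Subalgebra.toSubmodule (Algebra.adjoin O {z 4, z 5}) := by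
  set T := Algebra.adjoin O {z 4, z 5} with hT
  set M := filt O z 5 with hM
  set J := IsLocalRing.maximalIdeal O • M with hJ
  have hle := filt_six_le h2 z hφ
  have stabM : T ≤ multipliers O M := by
    rw [hT, Algebra.adjoin_le_iff]
    rintro c (rfl | rfl) w hw
    · exact hle (mul_mem_filt z (Or.inl rfl) hw)
    · exact hle (mul_mem_filt z (Or.inr rfl) hw)
  have stabJ : T ≤ multipliers O J := by
    intro c hc w hw
    have : J.map (LinearMap.mulLeft O c) ≤ J := by
      rw [hJ, Submodule.map_smul'']
      apply Submodule.smul_mono le_rfl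
      rintro _ ⟨w, hw, rfl⟩
      exact stabM hc w hw
    exact this ⟨w, hw, rfl⟩
  have hG (l) : conicVal z l ∈ M := filt_mono z (by omega) (conicVal_mem_filt z l)
  have hr (k) : specialRow (conicVal z) k ∈ J :=
    Submodule.smul_mono le_rfl (filt_mono z (by omega)) (hφ k)
  have hTM : Subalgebra.toSubmodule T ≤ M := by
    intro c hc
    have := stabM hc 1 (hG 0)
    rwa [mul_one] at this
  refine le_antisymm ?_ hTM
  have hx : z 4 ∈ T := Algebra.subset_adjoin (by simp)
  have hy : z 5 ∈ T := Algebra.subset_adjoin (by simp)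
  have r0 : z 0 * z 4 - 2 * z 5 + z 3 * z 5 ∈ J := hr 0
  have r1 : z 1 ∈ J := hr 1
  have r2 : z 0 * z 5 - 2 * z 1 * z 4 - z 2 - z 4 * (z 3 * z 4 - z 2 * z 5) ∈ J := hr 2
  have r3 : z 5 * (z 3 * z 4 - z 2 * z 5) - 1 + z 3 ∈ J := hr 3
  have r4 : z 0 - z 2 * z 4 ∈ J := hr 4
  have r5 : z 1 * z 4 ^ 2 - z 0 * z 4 * z 5 + z 5 ^ 2 ∈ J := hr 5
  have stabX {w : A} (h : w ∈ J) : z 4 * w ∈ J := stabJ hx w h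
  have stabY {w : A} (h : w ∈ J) : z 5 * w ∈ J := stabJ hy w h
  -- By Nakayama's lemma it suffices that `M ≤ T + J`.
  set E := Subalgebra.toSubmodule T ⊔ J with hE
  have stabE : T ≤ multipliers O E := by
    intro c hc w hw
    obtain ⟨t, ht, j, hj, rfl⟩ := Submodule.mem_sup.1 hw
    rw [mul_add]
    exact Submodule.add_mem_sup (T.mul_mem hc ht) (stabJ hc j hj)
  have EX {w : A} (h : w ∈ E) : z 4 * w ∈ E := stabE hx w h
  have EY {w : A} (h : w ∈ E) : z 5 * w ∈ E := stabE hy w h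
  have TE {w : A} (h : w ∈ T) : w ∈ E := Submodule.mem_sup_left h
  have JE {w : A} (h : w ∈ J) : w ∈ E := Submodule.mem_sup_right h
  have one : (1 : A) ∈ E := TE T.one_mem
  have hE0 : z 0 ∈ E ∧ z 2 ∈ E ∧ z 3 ∈ E := by
    generalize z 4 = x at *
    generalize z 5 = y at *
    generalize z 2 = u at *
    generalize z 3 = v at *
    generalize z 0 = a at *
    generalize z 1 = b at *
    have cong {w w' : A} (h : w ∈ J) (e : w' = w) : w' ∈ J := e ▸ h
    have two {w : A} (h : w ∈ J) : 2 * w ∈ J := by rw [two_mul]; exact add_mem h h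
    have p2 : x ^ 2 * u - 2 * y + y * v ∈ J := cong (sub_mem r0 (stabX r4)) (by ring)
    have p1 : 2 * x * y * u - u - x ^ 2 * v ∈ J :=
      cong (sub_mem (add_mem r2 (two (stabX r1))) (stabY r4)) (by ring)
    have p4 : y ^ 2 - x ^ 2 * y * u ∈ J :=
      cong (add_mem (sub_mem r5 (stabX (stabX r1))) (stabX (stabY r4))) (by ring)
    have p5 : v - 1 + 2 * x * y - x ^ 3 * u - y ^ 2 * u ∈ J :=
      cong (sub_mem r3 (stabX p2)) (by ring)
    have k1 : x ^ 2 * u - y - x * y ^ 2 + y ^ 3 * u ∈ J :=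
      cong (add_mem (sub_mem p2 (stabY p5)) (stabX p4)) (by ring)
    have k3 : x ^ 4 * u - x ^ 2 * y - x ^ 3 * y ^ 2 + y ^ 4 ∈ J :=
      cong (add_mem (stabX (stabX k1)) (stabY (stabY p4))) (by ring)
    have k4 : u - 2 * x * y * u + x ^ 2 - x ^ 3 * y + x ^ 4 * y ^ 2 - x * y ^ 4 + y ^ 3 ∈ J :=
      cong (sub_mem (stabY p4) (add_mem (add_mem p1 (stabX (stabX p5))) (stabX k3))) (by ring)
    have k5 : x * u - 2 * y ^ 2 + x ^ 3 - x ^ 4 * y + x ^ 5 * y ^ 2 - x ^ 2 * y ^ 4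
        + x * y ^ 3 ∈ J :=
      cong (sub_mem (stabX k4) (two p4)) (by ring)
    have k6 : u + x ^ 2 + x ^ 3 * y - 3 * y ^ 3 - x ^ 4 * y ^ 2 + x * y ^ 4
        + 2 * x ^ 5 * y ^ 3 - 2 * x ^ 2 * y ^ 5 ∈ J :=
      cong (add_mem k4 (two (stabY k5))) (by ring)
    have n2 : (2 : A) ∈ T := ofNat_mem T 2
    have n3 : (3 : A) ∈ T := ofNat_mem T 3
    have hu : u ∈ E := by
      have : x ^ 2 + x ^ 3 * y - 3 * y ^ 3 - x ^ 4 * y ^ 2 + x * y ^ 4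
          + 2 * x ^ 5 * y ^ 3 - 2 * x ^ 2 * y ^ 5 ∈ T := by
        refine sub_mem (add_mem (add_mem (sub_mem (sub_mem (add_mem ?_ ?_) ?_) ?_) ?_) ?_) ?_ <;>
        repeat' first | assumption | apply mul_mem | apply pow_mem
      have h := sub_mem (JE k6) (TE this)
      ring_nf at h
      exact h
    refine ⟨?_, hu, ?_⟩
    · have h := add_mem (JE r4) (EX hu)
      ring_nf at h
      exact h
    · have : 1 - 2 * x * y ∈ T :=
        sub_mem T.one_mem (mul_mem (mul_mem n2 hx) hy)
      have h := add_mem (add_mem (JE p5) (TE this)) (add_mem (EX (EX (EX hu))) (EY (EY hu)))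
      ring_nf at h
      exact h
  obtain ⟨m0, m2, m3⟩ := hE0
  have m1 : z 1 ∈ E := JE r1
  have n2 {w : A} (h : w ∈ E) : 2 * w ∈ E := by rw [two_mul]; exact add_mem h h
  have congE {w w' : A} (h : w ∈ E) (e : w' = w) : w' ∈ E := e ▸ h
  have mG (l) : conicVal z l ∈ E := by
    have dd : z 3 * z 4 - z 2 * z 5 ∈ E := congE (sub_mem (EX m3) (EY m2)) (by ring)
    have d1 : z 2 * z 4 ∈ E := congE (EX m2) (by ring)
    have d2 : z 2 * z 5 ∈ E := congE (EY m2) (by ring)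
    have d3 : z 3 * z 4 ∈ E := congE (EX m3) (by ring)
    have d4 : z 3 * z 5 ∈ E := congE (EY m3) (by ring)
    have d5 : z 0 * z 4 - 2 * z 5 ∈ E := congE (sub_mem (EX m0) (n2 (EY one))) (by ring)
    have d6 : z 0 * z 5 - 2 * z 1 * z 4 ∈ E := congE (sub_mem (EY m0) (n2 (EX m1))) (by ring)
    fin_cases l
    exacts [one, m0, m1, m2, m3, d1, d2, d3, d4, d5, d6, EX dd, EY dd, JE r5]
  refine Submodule.le_of_le_smul_of_le_jacobson_bot (filt_fg z 5)
    (IsLocalRing.maximalIdeal_le_jacobson _) (Submodule.span_le.2 ?_)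
  rintro w ⟨i, j, l, hij, rfl⟩
  exact stabE (mul_mem (pow_mem hx i) (pow_mem hy j)) _ (mG l)

end Local

section Local

variable {O A : Type*} [CommRing O] [IsLocalRing O] [CommRing A] [Algebra O A]

/-- Near `P₀`, the powers `b₁ⁱ` with `i < 18` span `b₁¹⁸` and all coordinates of the solution. The
algebra generated by `b₁, b₂` is a finite `O`-module containing all coordinates; modulo `𝔪` it is
spanned by these powers by `special_solution`, and Nakayama's lemma applies. -/
lemma local_span (h2 : IsUnit (2 : O)) (z : Fin 6 → A)
    (hφ : ∀ k, specialRow (conicVal z) k ∈ IsLocalRing.maximalIdeal O • filt O z 1) :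
    z 4 ^ 18 ∈ Submodule.span O (Set.range fun i : Fin 18 => z 4 ^ (i : ℕ)) ∧
    ∀ j, z j ∈ Submodule.span O (Set.range fun i : Fin 18 => z 4 ^ (i : ℕ)) := by
  have hMT := filt_eq_adjoin h2 z hφ
  set T := Algebra.adjoin O {z 4, z 5} with hT
  have hx : z 4 ∈ T := Algebra.subset_adjoin (by simp)
  have hy : z 5 ∈ T := Algebra.subset_adjoin (by simp)
  have hG (l) : conicVal z l ∈ T := by
    have := filt_mono z (show 1 ≤ 5 by omega) (conicVal_mem_filt (O := O) z l)
    rwa [hMT] at this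
  have hz (j) : z j ∈ T := by
    fin_cases j
    exacts [hG 1, hG 2, hG 3, hG 4, hx, hy]
  let zT : Fin 6 → T := fun j => ⟨z j, hz j⟩
  let I : Ideal T := (IsLocalRing.maximalIdeal O).map (algebraMap O T)
  let π : T →ₐ[O] T ⧸ I := Ideal.Quotient.mkₐ O I
  have hI (k) : specialRow (conicVal zT) k ∈ I := by
    have hk : specialRow (conicVal z) k ∈
        IsLocalRing.maximalIdeal O • Subalgebra.toSubmodule T := by
      rw [← hMT]
      exact Submodule.smul_mono le_rfl (filt_mono z (by omega)) (hφ k)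
    have e : ((specialRow (conicVal zT) k : T) : A) = specialRow (conicVal z) k :=
      (map_specialRow_conicVal T.val.toRingHom zT k).symm
    have e2 : IsLocalRing.maximalIdeal O • Subalgebra.toSubmodule T
        = (IsLocalRing.maximalIdeal O • (⊤ : Submodule O T)).map T.val.toLinearMap := by
      rw [Submodule.map_smul'']
      congr 1
      ext w; simp
    rw [e2] at hk
    obtain ⟨t, ht, hte⟩ := hk
    have : t = specialRow (conicVal zT) k := Subtype.ext (hte.trans e.symm)
    rw [← this]
    rw [Ideal.smul_top_eq_map] at ht
    exact ht
  have hsol := special_solution (fun j => π (zT j)) (fun k => by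
    have e : specialRow (conicVal fun j => π (zT j)) k = π (specialRow (conicVal zT) k) :=
      map_specialRow_conicVal π.toRingHom zT k
    rw [e]
    exact Ideal.Quotient.eq_zero_iff_mem.2 (hI k))
  obtain ⟨hy', hx'⟩ := hsol
  let N : Submodule O T := Submodule.span O (Set.range fun i : Fin 18 => zT 4 ^ (i : ℕ))
  let N' : Submodule O (T ⧸ I) := N.map π.toLinearMap
  have hN' : N' = Submodule.span O (Set.range fun i : Fin 18 => π (zT 4) ^ (i : ℕ)) := by
    simp only [N', N, Submodule.map_span, ← Set.range_comp]
    congr 2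
  have pw (i : ℕ) (hi : i < 18) : π (zT 4) ^ i ∈ N' := by
    rw [hN']
    exact Submodule.subset_span ⟨⟨i, hi⟩, rfl⟩
  have mx : π (zT 4) ∈ multipliers O N' := by
    have : N'.map (LinearMap.mulLeft O (π (zT 4))) ≤ N' := by
      conv_lhs => rw [hN']
      rw [Submodule.map_span_le]
      rintro _ ⟨i, rfl⟩
      rw [LinearMap.mulLeft_apply, ← pow_succ']
      rcases (show (i : ℕ) + 1 < 18 ∨ (i : ℕ) + 1 = 18 by omega) with h | h
      · exact pw _ h
      · rw [h, hx']
        exact pw _ (by omega)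
    exact fun w hw => this ⟨w, hw, rfl⟩
  have my : π (zT 5) ∈ multipliers O N' := by
    rw [hy']
    exact add_mem (neg_mem (pow_mem mx 4)) (mul_mem (ofNat_mem _ 2) (pow_mem mx 14))
  have all (t : T) : π t ∈ multipliers O N' := by
    obtain ⟨t, ht⟩ := t
    induction ht using Algebra.adjoin_induction with
    | mem t ht =>
      rcases ht with rfl | rfl
      · exact mx
      · exact my
    | algebraMap r => exact Subalgebra.algebraMap_mem _ r
    | add a b ha hb iha ihb => exact add_mem iha ihb
    | mul a b ha hb iha ihb => exact mul_mem iha ihb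
  have hfg : (⊤ : Submodule O T).FG := by
    have h5 : (Subalgebra.toSubmodule T).FG := hMT ▸ filt_fg z 5
    exact (Submodule.fg_top _).2 h5
  have htop : (⊤ : Submodule O T) ≤ N := by
    refine Submodule.le_of_le_smul_of_le_jacobson_bot hfg
      (IsLocalRing.maximalIdeal_le_jacobson _) ?_
    intro t _
    have h1 := all t 1 (by simpa using pw 0 (by omega))
    rw [mul_one] at h1
    obtain ⟨n, hn, hnt⟩ := h1
    have hd : t - n ∈ I := Ideal.Quotient.eq_zero_iff_mem.1 (by
      change π (t - n) = 0
      rw [map_sub, sub_eq_zero]; exact hnt.symm)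
    rw [show t = n + (t - n) by ring]
    refine Submodule.add_mem_sup hn ?_
    rw [Ideal.smul_top_eq_map]
    exact hd
  have out (t : T) :
      (t : A) ∈ Submodule.span O (Set.range fun i : Fin 18 => z 4 ^ (i : ℕ)) := by
    have : (t : A) ∈ N.map T.val.toLinearMap := ⟨t, htop trivial, rfl⟩
    simp only [N, Submodule.map_span, ← Set.range_comp] at this
    exact this
  exact ⟨out (zT 4 ^ 18), fun j => out (zT j)⟩

end Local

/-! ### Clearing denominators -/

/-- The entries of the special matrix `P₀`. -/
def specialMat (R : Type*) [CommRing R] (q : Fin 6 × Fin 14) : R :=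
  specialRow (fun l => if l = q.2 then 1 else 0) q.1

lemma specialRow_eq_sum {R A : Type*} [CommRing R] [CommRing A] (f : R →+* A)
    (G : Fin 14 → A) (k : Fin 6) :
    specialRow G k = ∑ l, f (specialMat R (k, l)) * G l := by
  fin_cases k <;>
    simp [specialRow, specialMat, apply_ite f, add_mul, sub_mul, Finset.sum_add_distrib,
      Finset.sum_sub_distrib]

/-- The finiteness statement of `local_span`, with denominators cleared. -/
lemma exists_relation {R U : Type*} [CommRing R] [CommRing U] [Algebra R U] (m : Ideal R)
    [m.IsPrime] (h2 : (2 : R) ∉ m) (P : Fin 6 × Fin 14 → R) (hP : ∀ q, specialMat R q - P q ∈ m)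
    (z : Fin 6 → U) (hz : ∀ i, ∑ l, algebraMap R U (P (i, l)) * conicVal z l = 0) (w : U)
    (hw : w = z 4 ^ 18 ∨ ∃ j, w = z j) :
    ∃ s, s ∉ m ∧ ∃ g : Polynomial R, g.degree < 18 ∧
      algebraMap R U s * w = g.eval₂ (algebraMap R U) (z 4) := by
  let O := Localization.AtPrime m
  let A := Localization (Algebra.algebraMapSubmonoid U m.primeCompl)
  let ζ : Fin 6 → A := fun j => algebraMap U A (z j)
  have h2' : IsUnit (2 : O) := by
    have := IsLocalization.map_units O (⟨2, h2⟩ : m.primeCompl)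
    rwa [show algebraMap R O ((⟨2, h2⟩ : m.primeCompl) : R) = 2 from map_ofNat _ 2] at this
  have tower (r : R) : algebraMap O A (algebraMap R O r) = algebraMap U A (algebraMap R U r) := by
    rw [← IsScalarTower.algebraMap_apply, ← IsScalarTower.algebraMap_apply]
  have hφ : ∀ k, specialRow (conicVal ζ) k ∈ IsLocalRing.maximalIdeal O • filt O ζ 1 := by
    intro k
    have e : specialRow (conicVal ζ) k
        = ∑ l, algebraMap R O (specialMat R (k, l) - P (k, l)) • conicVal ζ l := by
      have h0 : ∑ l, algebraMap U A (algebraMap R U (P (k, l))) * conicVal ζ l = 0 := by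
        have := congrArg (algebraMap U A) (hz k)
        rw [map_sum, map_zero] at this
        rw [← this]
        refine Finset.sum_congr rfl fun l _ => ?_
        rw [map_mul]
        congr 1
        exact map_conicVal (algebraMap U A) z l
      rw [specialRow_eq_sum ((algebraMap U A).comp (algebraMap R U)) (conicVal ζ) k,
        ← sub_zero (∑ l, _), ← h0, ← Finset.sum_sub_distrib]
      refine Finset.sum_congr rfl fun l _ => ?_
      rw [Algebra.smul_def, tower, map_sub, map_sub, RingHom.comp_apply]
      ring
    rw [e]
    refine sum_mem fun l _ => Submodule.smul_mem_smul ?_ (conicVal_mem_filt ζ l)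
    rw [← Localization.AtPrime.map_eq_maximalIdeal]
    exact Ideal.mem_map_of_mem _ (hP _)
  obtain ⟨h18, hj⟩ := local_span h2' ζ hφ
  have hw' : algebraMap U A w ∈ Submodule.span O (Set.range fun i : Fin 18 => ζ 4 ^ (i : ℕ)) := by
    rcases hw with rfl | ⟨j, rfl⟩
    · rw [map_pow]; exact h18
    · exact hj j
  obtain ⟨c, hc⟩ := (Submodule.mem_span_range_iff_exists_fun O).1 hw'
  obtain ⟨b, hb⟩ := IsLocalization.exist_integer_multiples_of_finite m.primeCompl c
  choose r hr using hb
  have e1 : algebraMap U A (algebraMap R U b * w)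
      = algebraMap U A (∑ i : Fin 18, algebraMap R U (r i) * z 4 ^ (i : ℕ)) := by
    rw [map_mul, ← hc, map_sum, Finset.mul_sum]
    refine Finset.sum_congr rfl fun i _ => ?_
    rw [map_mul, ← tower, ← tower, hr, map_pow, Algebra.smul_def, Algebra.smul_def, map_mul]
    ring
  obtain ⟨⟨_, t, ht, rfl⟩, hteq⟩ :=
    (IsLocalization.eq_iff_exists (Algebra.algebraMapSubmonoid U m.primeCompl) A).1 e1
  refine ⟨t * b, m.primeCompl.mul_mem ht b.2,
    ∑ i : Fin 18, Polynomial.C (t * r i) * Polynomial.X ^ (i : ℕ), ?_, ?_⟩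
  · refine lt_of_le_of_lt (Polynomial.degree_sum_le _ _) ?_
    rw [Finset.sup_lt_iff (WithBot.bot_lt_coe 18)]
    intro i _
    refine lt_of_le_of_lt (Polynomial.degree_C_mul_X_pow_le _ _) ?_
    exact_mod_cast i.2
  · rw [Polynomial.eval₂_finsetSum, map_mul, mul_assoc]
    refine hteq.trans ?_
    rw [Finset.mul_sum]
    refine Finset.sum_congr rfl fun i _ => ?_
    simp [mul_assoc]

/-! ### The incidence variety -/

/-- The coordinate ring of the space of `6 × 14` matrices. -/
abbrev MatRing := MvPolynomial (Fin 6 × Fin 14) ℚ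

/-- The coordinate ring of the incidence variety `{(P, z) | P · F(z) = 0}`. Since `F₀ = 1`, the
first column of `P` is determined by the rest, so this is a polynomial ring in the six
coordinates of `z` and the `6 × 13` remaining entries of `P`. -/
abbrev IncRing := MvPolynomial (Fin 6 ⊕ Fin 6 × Fin 13) ℚ

/-- The universal solution `z`. -/
noncomputable def univZ (j : Fin 6) : IncRing := X (Sum.inl j)

/-- The universal matrix with a solution. -/
noncomputable def univP (q : Fin 6 × Fin 14) : IncRing :=
  Fin.cases (-∑ l : Fin 13, X (Sum.inr (q.1, l)) * conicVal univZ l.succ)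
    (fun l => X (Sum.inr (q.1, l))) q.2

/-- The projection of the incidence variety to the space of matrices. -/
noncomputable def incProj : MatRing →ₐ[ℚ] IncRing := aeval univP

lemma univ_rel (i : Fin 6) : ∑ l, univP (i, l) * conicVal univZ l = 0 := by
  rw [Fin.sum_univ_succ]
  have : conicVal univZ 0 = 1 := rfl
  rw [this]
  simp [univP]

/-- The point `(P, z)` of the incidence variety; only the last 13 columns of `P` are used. -/
noncomputable def incPoint {S : Type*} [CommRing S] [Algebra ℚ S] (P : Fin 6 × Fin 14 → S)
    (z : Fin 6 → S) : IncRing →ₐ[ℚ] S :=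
  aeval (Sum.elim z fun q => P (q.1, q.2.succ))

section

variable {S : Type*} [CommRing S] [Algebra ℚ S] (P : Fin 6 × Fin 14 → S) (z : Fin 6 → S)

lemma incPoint_univZ (j : Fin 6) : incPoint P z (univZ j) = z j := by
  simp [incPoint, univZ]

lemma incPoint_incProj (h : ∀ i, ∑ l, P (i, l) * conicVal z l = 0) (r : MatRing) :
    incPoint P z (incProj r) = aeval P r := by
  suffices (incPoint P z).comp incProj = aeval P from DFunLike.congr_fun this r
  ext ⟨i, l⟩
  simp only [AlgHom.comp_apply, incProj, aeval_X]
  refine Fin.cases ?_ (fun l => ?_) l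
  · have h0 := h i
    rw [Fin.sum_univ_succ] at h0
    have h1 : conicVal z 0 = 1 := rfl
    rw [h1, mul_one] at h0
    rw [eq_neg_of_add_eq_zero_left h0]
    simp only [univP, Fin.cases_zero, map_neg, map_sum, map_mul]
    congr 1
    refine Finset.sum_congr rfl fun l _ => ?_
    congr 1
    · simp [incPoint]
    · refine (map_conicVal (incPoint P z).toRingHom univZ l.succ).symm.trans ?_
      congr 1
      ext j
      exact incPoint_univZ P z j
  · simp [univP, incPoint]

end

/-- `P₀` as a rational point of the space of matrices. -/
noncomputable def evalSpecial : MatRing →ₐ[ℚ] ℚ := aeval (specialMat ℚ)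

/-- Over the generic matrix, after inverting some `s` with `s(P₀) ≠ 0`, the coordinate `b₁` of
the universal solution is integral of degree `≤ 18`, and generates the other coordinates. -/
lemma exists_generic_relations : ∃ s : MatRing, evalSpecial s ≠ 0 ∧
    (∃ g : Polynomial MatRing, g.degree < 18 ∧
      incProj s * univZ 4 ^ 18 = g.eval₂ (incProj : MatRing →+* IncRing) (univZ 4)) ∧
    ∃ h : Fin 6 → Polynomial MatRing, ∀ j,
      incProj s * univZ j = (h j).eval₂ (incProj : MatRing →+* IncRing) (univZ 4) := by
  let _ : Algebra MatRing IncRing := (incProj : MatRing →+* IncRing).toAlgebra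
  have hal (r : MatRing) : algebraMap MatRing IncRing r = incProj r := rfl
  let m : Ideal MatRing := RingHom.ker (evalSpecial : MatRing →+* ℚ)
  have hm : m.IsPrime := RingHom.ker_isPrime _
  have mem (r : MatRing) : r ∈ m ↔ evalSpecial r = 0 := Iff.rfl
  have h2 : (2 : MatRing) ∉ m := by
    rw [mem, map_ofNat]
    norm_num
  have hP : ∀ q, specialMat MatRing q - (X q : MatRing) ∈ m := by
    intro q
    rw [mem, map_sub, sub_eq_zero, evalSpecial, aeval_X]
    have := map_specialRow (evalSpecial : MatRing →+* ℚ) (fun l => if l = q.2 then 1 else 0) q.1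
    rw [specialMat, specialMat]
    refine this.symm.trans ?_
    congr 1
    ext l
    split_ifs <;> simp
  have hz : ∀ i, ∑ l, algebraMap MatRing IncRing (X (i, l)) * conicVal univZ l = 0 := by
    intro i
    simp only [hal, incProj, aeval_X]
    exact univ_rel i
  have key := exists_relation m h2 X hP univZ hz
  obtain ⟨s, hs, g, hg, hge⟩ := key _ (Or.inl rfl)
  choose t ht h _ hh using fun j => key (univZ j) (Or.inr ⟨j, rfl⟩)
  refine ⟨s * ∏ j, t j, ?_, ⟨Polynomial.C (∏ j, t j) * g, ?_, ?_⟩,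
    fun j => Polynomial.C (s * ∏ i ∈ Finset.univ.erase j, t i) * h j, fun j => ?_⟩
  · rw [map_mul, map_prod]
    exact mul_ne_zero hs (Finset.prod_ne_zero_iff.2 fun j _ => ht j)
  · rw [← Polynomial.smul_eq_C_mul]
    exact lt_of_le_of_lt (Polynomial.degree_smul_le _ _) hg
  · rw [Polynomial.eval₂_mul, Polynomial.eval₂_C, map_mul, RingHom.coe_coe]
    have := hge
    rw [hal] at this
    linear_combination (incProj (∏ j, t j)) * this
  · rw [Polynomial.eval₂_mul, Polynomial.eval₂_C, ← Finset.mul_prod_erase _ t (Finset.mem_univ j)]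
    have := hh j
    rw [hal] at this
    simp only [map_mul, RingHom.coe_coe]
    linear_combination (incProj s * incProj (∏ i ∈ Finset.univ.erase j, t i)) * this

/-! ### The special fibre -/

/-- The polynomial whose roots are the values of `b₁` on the solutions of the special system,
with multiplicities. -/
noncomputable abbrev specialModulus : Polynomial ℚ := Polynomial.X ^ 18 - Polynomial.X ^ 13

/-- The solution of the special system over any ring with an element `T` satisfying
`T¹⁸ = T¹³`. -/
def specialZ {C : Type*} [CommRing C] (T : C) : Fin 6 → C :=
  ![-T ^ 3 + T ^ 8 + T ^ 13, 0, -T ^ 2 + T ^ 7 - 2 * T ^ 12 + 3 * T ^ 17, 1 + T ^ 5 - T ^ 15, T,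
    -T ^ 4 + 2 * T ^ 14]

lemma specialZ_rel {C : Type*} [CommRing C] (T : C) (h : T ^ 18 = T ^ 13) (k : Fin 6) :
    specialRow (conicVal (specialZ T)) k = 0 := by
  fin_cases k <;> simp [specialRow, conicVal, specialZ]
  · linear_combination (-2 * T ^ 11 - 2 * T ^ 6 + T) * h
  · linear_combination (6 * T ^ 14 + 4 * T ^ 9 + 5 * T ^ 4) * h
  · linear_combination (-12 * T ^ 27 - 4 * T ^ 22 + 4 * T ^ 17 - 2 * T ^ 12 - T ^ 7) * h
  · linear_combination (-3) * h
  · linear_combination (2 * T ^ 10 - 1) * h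

/-! ### Polynomials over a factorial domain -/

section

variable {R S : Type*} [CommRing R] [CommRing S]

/-- A Bézout relation over the fraction field, with denominators cleared. -/
lemma exists_bezout_of_isCoprime_map [IsDomain R] (p q : Polynomial R)
    (h : IsCoprime (p.map (algebraMap R (FractionRing R)))
      (q.map (algebraMap R (FractionRing R)))) :
    ∃ (a b : Polynomial R) (d : R), d ≠ 0 ∧ a * p + b * q = Polynomial.C d := by
  obtain ⟨a, b, hab⟩ := h
  obtain ⟨u, hu0, hu⟩ := IsLocalization.integerNormalization_spec (nonZeroDivisors R) a
  obtain ⟨v, hv0, hv⟩ := IsLocalization.integerNormalization_spec (nonZeroDivisors R) b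
  refine ⟨Polynomial.C v * IsLocalization.integerNormalization (nonZeroDivisors R) a,
    Polynomial.C u * IsLocalization.integerNormalization (nonZeroDivisors R) b, u * v,
    mul_ne_zero (nonZeroDivisors.ne_zero hu0) (nonZeroDivisors.ne_zero hv0), ?_⟩
  apply Polynomial.map_injective _ (IsFractionRing.injective R (FractionRing R))
  have sm (r : R) (w : Polynomial (FractionRing R)) :
      r • w = Polynomial.C (algebraMap R (FractionRing R) r) * w := by
    rw [← Polynomial.smul_eq_C_mul, algebraMap_smul]
  simp only [Polynomial.map_add, Polynomial.map_mul, Polynomial.map_C, hu, hv, sm, map_mul]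
  linear_combination (Polynomial.C (algebraMap R (FractionRing R) u) *
    Polynomial.C (algebraMap R (FractionRing R) v)) * hab

/-- By Gauss's lemma, an irreducible polynomial with root `x` divides every polynomial with
root `x`. -/
lemma dvd_of_eval₂_eq_zero [IsDomain R] [UniqueFactorizationMonoid R] (φ : R →+* S)
    (hφ : Function.Injective φ) (x : S) {f h : Polynomial R} (hf : Irreducible f)
    (hdeg : f.natDegree ≠ 0) (hfx : f.eval₂ φ x = 0) (hhx : h.eval₂ φ x = 0) : f ∣ h := by
  have prim : f.IsPrimitive := hf.isPrimitive hdeg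
  have irr := (prim.irreducible_iff_irreducible_map_fraction_map (K := FractionRing R)).1 hf
  refine prim.dvd_of_fraction_map_dvd_fraction_map (K := FractionRing R) ?_
  by_contra hnd
  obtain ⟨a, b, d, hd, e⟩ := exists_bezout_of_isCoprime_map f h
    (irr.coprime_iff_not_dvd.2 hnd)
  have := congrArg (Polynomial.eval₂ φ x) e
  rw [Polynomial.eval₂_add, Polynomial.eval₂_mul, Polynomial.eval₂_mul, hfx, hhx, mul_zero,
    mul_zero, add_zero, Polynomial.eval₂_C] at this
  exact hd ((map_eq_zero_iff φ hφ).1 this.symm)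

lemma exists_bezout_derivative [IsDomain R] [UniqueFactorizationMonoid R] [CharZero R]
    {f : Polynomial R} (hf : Irreducible f) (hdeg : f.natDegree ≠ 0) :
    ∃ (a b : Polynomial R) (d : R), d ≠ 0 ∧ a * f + b * f.derivative = Polynomial.C d := by
  have prim : f.IsPrimitive := hf.isPrimitive hdeg
  have irr := (prim.irreducible_iff_irreducible_map_fraction_map (K := FractionRing R)).1 hf
  have : CharZero (FractionRing R) :=
    charZero_of_injective_algebraMap (IsFractionRing.injective R (FractionRing R))
  have sep := irr.separable
  rw [Polynomial.Separable, Polynomial.derivative_map] at sep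
  exact exists_bezout_of_isCoprime_map _ _ sep

lemma exists_irreducible_dvd_of_eval₂_eq_zero [IsDomain S]
    [UniqueFactorizationMonoid R] (φ : R →+* S) (x : S) {g : Polynomial R} (hg : g ≠ 0)
    (hgx : g.eval₂ φ x = 0) :
    ∃ f, Irreducible f ∧ f ∣ g ∧ f.eval₂ φ x = 0 := by
  obtain ⟨m, hm, u, hu⟩ := WfDvdMonoid.exists_factors g hg
  have h0 : (m.map (Polynomial.eval₂RingHom φ x)).prod = 0 := by
    rw [← map_multiset_prod]
    have h1 : Polynomial.eval₂RingHom φ x (m.prod * u) = 0 := by rw [hu]; exact hgx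
    rw [map_mul] at h1
    exact (mul_eq_zero.1 h1).resolve_right (u.isUnit.map (Polynomial.eval₂RingHom φ x)).ne_zero
  rw [Multiset.prod_eq_zero_iff, Multiset.mem_map] at h0
  obtain ⟨f, hfm, hf0⟩ := h0
  exact ⟨f, hm f hfm, (Multiset.dvd_prod hfm).trans ⟨u, hu.symm⟩, hf0⟩

end

/-! ### Dominance of the projection -/

lemma specialMat_rel {C : Type*} [CommRing C] [Algebra ℚ C] (T : C) (h : T ^ 18 = T ^ 13)
    (i : Fin 6) :
    ∑ l, algebraMap ℚ C (specialMat ℚ (i, l)) * conicVal (specialZ T) l = 0 := by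
  rw [← specialRow_eq_sum (algebraMap ℚ C), specialZ_rel T h]

/-- The point of the incidence variety over `P₀` given by `specialZ T`. -/
noncomputable def specialPoint {C : Type*} [CommRing C] [Algebra ℚ C] (T : C) :
    IncRing →ₐ[ℚ] C :=
  incPoint (fun q => algebraMap ℚ C (specialMat ℚ q)) (specialZ T)

lemma specialPoint_incProj {C : Type*} [CommRing C] [Algebra ℚ C] (T : C)
    (h : T ^ 18 = T ^ 13) (r : MatRing) :
    specialPoint T (incProj r) = algebraMap ℚ C (evalSpecial r) := by
  rw [specialPoint, incPoint_incProj _ _ (specialMat_rel T h), evalSpecial]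
  exact MvPolynomial.aeval_algebraMap_apply C (specialMat ℚ) r

lemma specialPoint_univZ_four {C : Type*} [CommRing C] [Algebra ℚ C] (T : C) :
    specialPoint T (univZ 4) = T := by
  rw [specialPoint, incPoint_univZ]
  rfl

lemma incProj_ne_zero {s : MatRing} (hs : evalSpecial s ≠ 0) : incProj s ≠ 0 := by
  intro h
  have := specialPoint_incProj (1 : ℚ) (by norm_num) s
  rw [h, map_zero] at this
  exact hs this.symm

/-- The projection of the incidence variety is dominant: source and target have dimension 84,
and the coordinates upstairs are algebraic over those downstairs. -/
lemma incProj_injective : Function.Injective incProj := by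
  obtain ⟨s, hs, ⟨g, hg, hge⟩, h, hh⟩ := exists_generic_relations
  let B := Algebra.adjoin ℚ (Set.range univP)
  have hB (r : MatRing) : incProj r ∈ B := by
    change incProj r ∈ Algebra.adjoin ℚ (Set.range univP)
    rw [Algebra.adjoin_range_eq_range_aeval]
    exact ⟨r, rfl⟩
  let φ : MatRing →ₐ[ℚ] B := incProj.codRestrict B hB
  have hφ : (algebraMap B IncRing).comp (φ : MatRing →+* B) = (incProj : MatRing →+* IncRing) := rfl
  have hev (p : Polynomial MatRing) : p.eval₂ (incProj : MatRing →+* IncRing) (univZ 4) =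
      Polynomial.aeval (univZ 4) (p.map (φ : MatRing →+* B)) := by
    rw [Polynomial.aeval_def, Polynomial.eval₂_map, hφ]
  have hs0 : φ s ≠ 0 := fun h0 => incProj_ne_zero hs (congrArg Subtype.val h0)
  have alg4 : IsAlgebraic B (univZ 4) := by
    refine ⟨Polynomial.C (φ s) * Polynomial.X ^ 18 - g.map (φ : MatRing →+* B), ?_, ?_⟩
    · intro h0
      have := congrArg (fun p => Polynomial.coeff p 18) h0
      simp only [Polynomial.coeff_sub, Polynomial.coeff_C_mul, Polynomial.coeff_X_pow_self,
        mul_one, Polynomial.coeff_map, Polynomial.coeff_eq_zero_of_degree_lt hg, map_zero,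
        sub_zero, Polynomial.coeff_zero] at this
      exact hs0 this
    · rw [map_sub, ← hev, ← hge, map_mul, Polynomial.aeval_C, map_pow, Polynomial.aeval_X]
      exact sub_self _
  have algj (j : Fin 6) : IsAlgebraic B (univZ j) := by
    refine IsAlgebraic.of_mul (y := incProj s)
      (mem_nonZeroDivisors_of_ne_zero (incProj_ne_zero hs))
      (isAlgebraic_algebraMap (A := IncRing) (φ s)) ?_
    rw [hh, hev]
    have le : Algebra.adjoin B {univZ 4} ≤ Subalgebra.algebraicClosure B IncRing :=
      Algebra.adjoin_le (Set.singleton_subset_iff.2 alg4)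
    exact le (Polynomial.aeval_mem_adjoin_singleton B (univZ 4))
  have : Algebra.IsAlgebraic (Algebra.adjoin ℚ (Set.range univP)) IncRing := by
    refine ⟨fun y => ?_⟩
    change y ∈ Subalgebra.algebraicClosure B IncRing
    induction y using MvPolynomial.induction_on with
    | C a => exact isAlgebraic_algebraMap (A := IncRing) (algebraMap ℚ B a)
    | add p q hp hq => exact add_mem hp hq
    | mul_X p n hp =>
      refine mul_mem hp ?_
      rcases n with j | ⟨i, l⟩
      · exact algj j
      · have := isAlgebraic_algebraMap (R := B) (A := IncRing) (φ (X (i, l.succ)))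
        have e : algebraMap B IncRing (φ (X (i, l.succ))) = X (Sum.inr (i, l)) := by
          change incProj (X (i, l.succ)) = _
          simp [incProj, univP]
        rwa [e] at this
  have tb := Algebra.IsAlgebraic.isTranscendenceBasis_of_le_trdeg_of_finite ℚ univP (by
    rw [MvPolynomial.trdeg_of_isDomain]
    simp)
  exact tb.1

/-! ### The minimal polynomial of `b₁` and the count -/

/-- The homogenization of `F` in degree 3, with homogenizing variable `c`. -/
def conicHom {A : Type*} [CommRing A] (c : A) (z : Fin 6 → A) : Fin 14 → A :=
  ![c ^ 3, c ^ 2 * z 0, c ^ 2 * z 1, c ^ 2 * z 2, c ^ 2 * z 3,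
    c * z 2 * z 4, c * z 2 * z 5, c * z 3 * z 4, c * z 3 * z 5,
    c * z 0 * z 4 - 2 * c ^ 2 * z 5, c * z 0 * z 5 - 2 * c * z 1 * z 4,
    z 4 * (z 3 * z 4 - z 2 * z 5), z 5 * (z 3 * z 4 - z 2 * z 5),
    z 1 * z 4 ^ 2 - z 0 * z 4 * z 5 + c * z 5 ^ 2]

lemma conicHom_mul {A : Type*} [CommRing A] (c : A) (z : Fin 6 → A) (l : Fin 14) :
    conicHom c (fun j => c * z j) l = c ^ 3 * conicVal z l := by
  fin_cases l <;> simp [conicHom, conicVal] <;> ring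

lemma map_conicHom {A B : Type*} [CommRing A] [CommRing B] (f : A →+* B) (c : A)
    (z : Fin 6 → A) (l : Fin 14) :
    f (conicHom c z l) = conicHom (f c) (fun j => f (z j)) l := by
  have h2 : f 2 = 2 := map_ofNat f 2
  fin_cases l <;> simp [conicHom, h2]

lemma aeval_conicF {A : Type*} [CommRing A] [Algebra ℚ A] (z : Fin 6 → A) (l : Fin 14) :
    aeval z (conicF l) = conicVal z l := by
  fin_cases l <;> simp [conicF, conicVal]

/-- The minimal polynomial of `b₁` over the generic matrix has degree 18: its degree is at most
18 since `b₁` satisfies an equation of that degree, and at least 18 since its reduction at `P₀`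
vanishes at the point `b₁ = T` of `ℚ[T]/(T¹⁸ - T¹³)`. -/
lemma exists_minimal_polynomial {s : MatRing} (hs : evalSpecial s ≠ 0) {g : Polynomial MatRing}
    (hg : g.degree < 18)
    (hge : incProj s * univZ 4 ^ 18 = g.eval₂ (incProj : MatRing →+* IncRing) (univZ 4)) :
    ∃ f : Polynomial MatRing, Irreducible f ∧ f.natDegree = 18 ∧
      f.eval₂ (incProj : MatRing →+* IncRing) (univZ 4) = 0 := by
  have hs0 : s ≠ 0 := by
    rintro rfl
    exact hs (map_zero _)
  have hlt : g.degree < (Polynomial.C s * Polynomial.X ^ 18).degree := by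
    rwa [Polynomial.degree_C_mul_X_pow _ hs0]
  have hlc : (Polynomial.C s * Polynomial.X ^ 18 - g).leadingCoeff = s := by
    rw [Polynomial.leadingCoeff_sub_of_degree_lt hlt, Polynomial.leadingCoeff_C_mul_X_pow]
  have hdeg : (Polynomial.C s * Polynomial.X ^ 18 - g).natDegree = 18 := by
    apply Polynomial.natDegree_eq_of_degree_eq_some
    rw [Polynomial.degree_sub_eq_left_of_degree_lt hlt, Polynomial.degree_C_mul_X_pow _ hs0]
  have hne : Polynomial.C s * Polynomial.X ^ 18 - g ≠ 0 := by
    rw [← Polynomial.leadingCoeff_ne_zero, hlc]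
    exact hs0
  obtain ⟨f, hirr, hdvd, hf0⟩ := exists_irreducible_dvd_of_eval₂_eq_zero
    (incProj : MatRing →+* IncRing) (univZ 4) hne (by
      rw [Polynomial.eval₂_sub, Polynomial.eval₂_mul, Polynomial.eval₂_C, Polynomial.eval₂_X_pow,
        ← hge]
      exact sub_self _)
  refine ⟨f, hirr, le_antisymm (hdeg ▸ Polynomial.natDegree_le_of_dvd hdvd hne) ?_, hf0⟩
  have hlf : evalSpecial f.leadingCoeff ≠ 0 := by
    intro h0
    have := map_dvd evalSpecial (Polynomial.leadingCoeff_dvd_leadingCoeff hdvd)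
    rw [h0, hlc, zero_dvd_iff] at this
    exact hs this
  have hT : AdjoinRoot.root specialModulus ^ 18 = AdjoinRoot.root specialModulus ^ 13 := by
    have := AdjoinRoot.mk_self (f := specialModulus)
    rwa [specialModulus, map_sub, map_pow, map_pow, AdjoinRoot.mk_X, sub_eq_zero] at this
  have hmk : AdjoinRoot.mk specialModulus (f.map (evalSpecial : MatRing →+* ℚ)) = 0 := by
    have h1 := congrArg (specialPoint (AdjoinRoot.root specialModulus)) hf0
    rw [map_zero, ← AlgHom.coe_toRingHom, Polynomial.hom_eval₂] at h1
    rw [← AdjoinRoot.aeval_eq, Polynomial.aeval_def, Polynomial.eval₂_map, ← h1]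
    congr 1
    · ext r
      · simp
      · exact (specialPoint_incProj _ hT _).symm
    · exact (specialPoint_univZ_four _).symm
  have hmap : f.map (evalSpecial : MatRing →+* ℚ) ≠ 0 := fun h0 => by
    have := congrArg (fun p => Polynomial.coeff p f.natDegree) h0
    simp only [Polynomial.coeff_map, Polynomial.coeff_zero] at this
    exact hlf this
  have hmod : specialModulus.natDegree = 18 := by
    rw [specialModulus]
    compute_degree!
  calc 18 = specialModulus.natDegree := hmod.symm
    _ ≤ _ := Polynomial.natDegree_le_of_dvd (AdjoinRoot.mk_eq_zero.1 hmk) hmap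
    _ ≤ _ := Polynomial.natDegree_map_le

/-- Outside the zero set of one polynomial, the solutions of the system correspond to the roots
of a separable polynomial of degree 18, via the coordinate `b₁`. -/
lemma generic_count {s : MatRing} {f : Polynomial MatRing} (hdeg : f.natDegree = 18)
    {a b : Polynomial MatRing} {d : MatRing} (hab : a * f + b * f.derivative = Polynomial.C d)
    (hf : f.eval₂ (incProj : MatRing →+* IncRing) (univZ 4) = 0)
    (h : Fin 6 → Polynomial MatRing)
    (hh : ∀ j, incProj s * univZ j = (h j).eval₂ (incProj : MatRing →+* IncRing) (univZ 4))
    (h4 : h 4 = Polynomial.C s * Polynomial.X)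
    (he : ∀ i, f ∣ ∑ l, Polynomial.C (X (i, l)) * conicHom (Polynomial.C s) h l)
    (P : Fin 6 × Fin 14 → ℂ) (hs : aeval P s ≠ 0) (hlf : aeval P f.leadingCoeff ≠ 0)
    (hd : aeval P d ≠ 0) :
    {z : Fin 6 → ℂ | ∀ i, ∑ l, P (i, l) * conicVal z l = 0}.Finite ∧
      {z : Fin 6 → ℂ | ∀ i, ∑ l, P (i, l) * conicVal z l = 0}.ncard = 18 := by
  let ψ : MatRing →+* ℂ := (aeval P : MatRing →ₐ[ℚ] ℂ)
  have hψ (r : MatRing) : ψ r = aeval P r := rfl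
  let fP : Polynomial ℂ := f.map ψ
  have hfP : fP.natDegree = 18 := by
    rw [← hdeg]
    exact Polynomial.natDegree_map_of_leadingCoeff_ne_zero ψ hlf
  have hfP0 : fP ≠ 0 := by
    rintro h0
    rw [h0, Polynomial.natDegree_zero] at hfP
    norm_num at hfP
  have hsep : fP.Separable := by
    have e := congrArg (Polynomial.map ψ) hab
    simp only [Polynomial.map_add, Polynomial.map_mul, Polynomial.map_C] at e
    refine ⟨Polynomial.C (ψ d)⁻¹ * a.map ψ, Polynomial.C (ψ d)⁻¹ * b.map ψ, ?_⟩
    rw [Polynomial.derivative_map]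
    have hc : Polynomial.C (ψ d)⁻¹ * Polynomial.C (ψ d) = 1 := by
      rw [← Polynomial.C_mul, inv_mul_cancel₀ (show ψ d ≠ 0 from hd), Polynomial.C_1]
    linear_combination Polynomial.C (ψ d)⁻¹ * e + hc
  have point {z : Fin 6 → ℂ} (hz : ∀ i, ∑ l, P (i, l) * conicVal z l = 0)
      (p : Polynomial MatRing) :
      incPoint P z (p.eval₂ (incProj : MatRing →+* IncRing) (univZ 4)) = p.eval₂ ψ (z 4) := by
    rw [← AlgHom.coe_toRingHom, Polynomial.hom_eval₂]
    congr 1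
    · refine RingHom.ext fun r => incPoint_incProj P z hz r
    · exact incPoint_univZ P z 4
  have coord {z : Fin 6 → ℂ} (hz : ∀ i, ∑ l, P (i, l) * conicVal z l = 0) (j : Fin 6) :
      ψ s * z j = (h j).eval₂ ψ (z 4) := by
    rw [← point hz, ← hh, map_mul, incPoint_incProj P z hz, incPoint_univZ, hψ]
  have bij : Set.BijOn (fun z : Fin 6 → ℂ => z 4)
      {z : Fin 6 → ℂ | ∀ i, ∑ l, P (i, l) * conicVal z l = 0} (fP.rootSet ℂ) := by
    refine ⟨fun z hz => ?_, fun z hz w hw e => ?_, fun t ht => ?_⟩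
    · rw [Polynomial.mem_rootSet]
      refine ⟨hfP0, ?_⟩
      rw [Polynomial.coe_aeval_eq_eval, Polynomial.eval_map, ← point hz, hf, map_zero]
    · funext j
      apply mul_left_cancel₀ hs
      have e4 : z 4 = w 4 := e
      rw [← hψ, coord hz, coord hw, e4]
    · rw [Polynomial.mem_rootSet, Polynomial.coe_aeval_eq_eval, Polynomial.eval_map] at ht
      let z : Fin 6 → ℂ := fun j => (ψ s)⁻¹ * (h j).eval₂ ψ t
      have hsz (j : Fin 6) : ψ s * z j = (h j).eval₂ ψ t := mul_inv_cancel_left₀ hs _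
      have z4 : z 4 = t := by
        apply mul_left_cancel₀ hs
        rw [← hψ, hsz, h4, Polynomial.eval₂_mul, Polynomial.eval₂_C, Polynomial.eval₂_X]
      refine ⟨z, fun i => ?_, z4⟩
      obtain ⟨q, hq⟩ := he i
      have e := congrArg (Polynomial.eval₂RingHom ψ t) hq
      simp only [map_sum, map_mul, map_conicHom, Polynomial.coe_eval₂RingHom,
        Polynomial.eval₂_C, ht.2, zero_mul, ← hsz, conicHom_mul] at e
      apply mul_left_cancel₀ (pow_ne_zero 3 hs)
      rw [mul_zero, ← hψ, ← e, Finset.mul_sum]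
      refine Finset.sum_congr rfl fun l _ => ?_
      rw [hψ (X (i, l)), aeval_X]
      ring
  have hcard : (fP.rootSet ℂ).ncard = 18 := by
    rw [← Nat.card_coe_set_eq, Nat.card_eq_fintype_card,
      Polynomial.card_rootSet_eq_natDegree hsep (IsAlgClosed.splits _), hfP]
  refine ⟨bij.finite_iff_finite.2 (Polynomial.rootSet_finite _ _), ?_⟩
  rw [← hcard, ← bij.image_eq, bij.injOn.ncard_image]

/-- There is a nonzero rational polynomial `Q` in the 84 entries of a
`6×14` matrix such that for every complex matrix `P` with `Q(P) ≠ 0`, the system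
`P·F(a,b) = 0` of six equations in six unknowns has exactly 18 solutions in `ℂ⁶` (the count
of plane conics through the origin meeting six general lines in `ℂ³`). -/
theorem eighteen_conics :
    ∃ Q : MvPolynomial (Fin 6 × Fin 14) ℚ, Q ≠ 0 ∧
      ∀ P : Matrix (Fin 6) (Fin 14) ℂ,
        aeval (fun p : Fin 6 × Fin 14 => P p.1 p.2) Q ≠ 0 →
          ({z : Fin 6 → ℂ |
              ∀ i : Fin 6, ∑ j : Fin 14, P i j * aeval z (conicF j) = 0}).Finite ∧
          ({z : Fin 6 → ℂ |
              ∀ i : Fin 6, ∑ j : Fin 14, P i j * aeval z (conicF j) = 0}).ncard = 18 := by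
  obtain ⟨s, hs, ⟨g, hg, hge⟩, h₀, hh₀⟩ := exists_generic_relations
  obtain ⟨f, hirr, hdeg, hf⟩ := exists_minimal_polynomial hs hg hge
  have hdeg0 : f.natDegree ≠ 0 := by rw [hdeg]; norm_num
  obtain ⟨a, b, d, hd, hab⟩ := exists_bezout_derivative hirr hdeg0
  have hs0 : s ≠ 0 := by
    rintro rfl
    exact hs (map_zero _)
  have hf0 : f.leadingCoeff ≠ 0 := Polynomial.leadingCoeff_ne_zero.2 hirr.ne_zero
  -- Taking `s * T` as the numerator of `b₁` makes the solution built from a root `t` have `b₁ = t`.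
  let h : Fin 6 → Polynomial MatRing := Function.update h₀ 4 (Polynomial.C s * Polynomial.X)
  have h4 : h 4 = Polynomial.C s * Polynomial.X := Function.update_self ..
  have hh (j : Fin 6) :
      incProj s * univZ j = (h j).eval₂ (incProj : MatRing →+* IncRing) (univZ 4) := by
    by_cases hj : j = 4
    · rw [hj, h4, Polynomial.eval₂_mul, Polynomial.eval₂_C, Polynomial.eval₂_X]
      rfl
    · rw [hh₀, show h j = h₀ j from Function.update_of_ne hj _ _]
  have he (i : Fin 6) :
      f ∣ ∑ l, Polynomial.C (X (i, l)) * conicHom (Polynomial.C s) h l := by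
    refine dvd_of_eval₂_eq_zero (incProj : MatRing →+* IncRing) incProj_injective (univZ 4) hirr
      hdeg0 hf ?_
    rw [← Polynomial.coe_eval₂RingHom, map_sum]
    simp only [map_mul, map_conicHom, Polynomial.coe_eval₂RingHom, Polynomial.eval₂_C, ← hh,
      RingHom.coe_coe, conicHom_mul]
    rw [← mul_zero (incProj s ^ 3), ← univ_rel i, Finset.mul_sum]
    refine Finset.sum_congr rfl fun l _ => ?_
    simp only [incProj, aeval_X]
    ring
  refine ⟨s * f.leadingCoeff * d, mul_ne_zero (mul_ne_zero hs0 hf0) hd, fun P hP => ?_⟩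
  rw [map_mul, map_mul] at hP
  have := generic_count hdeg hab hf h hh h4 he (fun p => P p.1 p.2)
    (left_ne_zero_of_mul (left_ne_zero_of_mul hP)) (right_ne_zero_of_mul (left_ne_zero_of_mul hP))
    (right_ne_zero_of_mul hP)
  simpa only [aeval_conicF] using this
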